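/- arXiv:1412.8399 — 2 statements merged into one kernel-verified Lean document; each statement's English description precedes it below -/
import Mathlib

section
/- There is no sentence ψ in the monadic second-order language MS₀ (with set variables, predicates ⊆, Sing, Ind, connectives, and set quantifiers) such that a finite matroid M satisfies ψ (interpreting Ind by the independent sets of M) if and only if M is representable over at least one field. -/
open Set

/-- Formulas of the monadic second-order language `MS₀`, with (monadic, set-valued)
variables given by de Bruijn indices: atomic formulas `Xᵢ ⊆ Xⱼ`, `Sing(Xᵢ)`,
`Ind(Xᵢ)`, negation, conjunction, and existential and universal set quantifiers.
`MS0 n` is the type of formulas with free variables among `X₀, …, X_{n-1}`. -/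
inductive MS0 : ℕ → Type
  | subset {n : ℕ} (i j : Fin n) : MS0 n
  | sing {n : ℕ} (i : Fin n) : MS0 n
  | ind {n : ℕ} (i : Fin n) : MS0 n
  | not {n : ℕ} (φ : MS0 n) : MS0 n
  | and {n : ℕ} (φ ψ : MS0 n) : MS0 n
  | ex {n : ℕ} (φ : MS0 (n + 1)) : MS0 n
  | all {n : ℕ} (φ : MS0 (n + 1)) : MS0 n

/-- Satisfaction of an `MS₀` formula in a matroid `M`, under a valuation sending each
variable to a subset of the ground set: `⊆` is interpreted as set inclusion, `Sing`
as having cardinality one, `Ind` as independence in `M`, and quantifiers range over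
subsets of the ground set of `M`. -/
def MS0.Sat {α : Type*} (M : Matroid α) : ∀ {n : ℕ}, MS0 n → (Fin n → Set α) → Prop
  | _, .subset i j, v => v i ⊆ v j
  | _, .sing i, v => (v i).encard = 1
  | _, .ind i, v => M.Indep (v i)
  | _, .not φ, v => ¬ MS0.Sat M φ v
  | _, .and φ ψ, v => MS0.Sat M φ v ∧ MS0.Sat M ψ v
  | _, .ex φ, v => ∃ Y ⊆ M.E, MS0.Sat M φ (Fin.cons Y v)
  | _, .all φ, v => ∀ Y ⊆ M.E, MS0.Sat M φ (Fin.cons Y v)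

/-- A matroid `M` is representable over a field `K` if there is an assignment of
vectors to the elements of the ground set realising the independent sets of `M` as the
linearly independent families. -/
def RepOver (K : Type) [Field K] {α : Type*} (M : Matroid α) : Prop :=
  ∃ (ι : Type) (φ : α → (ι → K)),
    ∀ I : Set α, I ⊆ M.E → (M.Indep I ↔ LinearIndependent K (fun x : I => φ x.val))

/-- A matroid is representable if it is representable over at least one field. -/
def Representable {α : Type*} (M : Matroid α) : Prop :=
  ∃ (K : Type) (_ : Field K), RepOver K M

section lin

variable {F V K W : Type*} [Field F] [AddCommGroup V] [Module F V] [Field K] [AddCommGroup W]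
  [Module K W]

theorem line_transfer (ψ : V → W) (h : ∀ I : Set V, LinearIndepOn F id I ↔ LinearIndepOn K ψ I)
    {x y z : V} (hne : x ≠ y) (hxy : ∀ c d : F, c • x + d • y = 0 → c = 0 ∧ d = 0) (a b : F)
    (hz : a • x + b • y = z) : ∃ c d : K, c • ψ x + d • ψ y = ψ z := by
  have h1 : LinearIndepOn F id {x, y} := (LinearIndepOn.pair_iff id hne).2 hxy
  have h2 := (h _).1 h1
  have h3 : id z ∈ Submodule.span F (id '' {x, y}) := by
    rw [image_id]
    exact Submodule.mem_span_pair.2 ⟨a, b, hz⟩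
  rw [h1.mem_span_iff, h, ← h2.mem_span_iff, image_pair] at h3
  exact Submodule.mem_span_pair.1 h3

theorem ne_zero_transfer (ψ : V → W) (h : ∀ I : Set V, LinearIndepOn F id I ↔ LinearIndepOn K ψ I)
    {x : V} (hx : x ≠ 0) : ψ x ≠ 0 := by
  have h1 := (h {x}).1 (LinearIndepOn.singleton (by simpa using hx))
  simpa using h1

set_option maxHeartbeats 1000000 in
theorem staudt (ψ : (Fin 3 → F) → W)
    (h : ∀ I : Set (Fin 3 → F), LinearIndepOn F id I ↔ LinearIndepOn K ψ I)
    (p : ℕ) (hp : (p : F) = 0) : (p : K) = 0 := by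
  have hne : ∀ x : Fin 3 → F, x ≠ 0 → ψ x ≠ 0 := fun x hx => ne_zero_transfer ψ h hx
  have hB : ∀ a b c : K, a • ψ ![1,0,0] + b • ψ ![0,1,0] + c • ψ ![0,0,1] = 0 →
      a = 0 ∧ b = 0 ∧ c = 0 := by
    have hli : LinearIndependent F (![![1,0,0], ![0,1,0], ![0,0,1]] : Fin 3 → Fin 3 → F) := by
      rw [Fintype.linearIndependent_iff]
      intro g hg
      have h0 := congrFun hg 0
      have h1 := congrFun hg 1
      have h2 := congrFun hg 2
      simp [Fin.sum_univ_three] at h0 h1 h2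
      intro i
      fin_cases i <;> simp [h0, h1, h2]
    have h4 := (h _).1 hli.linearIndepOn_id
    rw [← image_univ] at h4
    have h5 := h4.comp_of_image hli.injective.injOn
    rw [linearIndepOn_univ_iff, Fintype.linearIndependent_iff] at h5
    intro a b c habc
    have := h5 ![a, b, c] (by simpa [Fin.sum_univ_three] using habc)
    exact ⟨this 0, this 1, this 2⟩
  -- normalise
  obtain ⟨r, s, hrs⟩ := line_transfer ψ h (x := ![1,0,0]) (y := ![0,0,1]) (z := ![1,0,1])
    (by simp) (by intro c d hcd; simpa using hcd) 1 1 (by simp)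
  obtain ⟨t, u, htu⟩ := line_transfer ψ h (x := ![0,1,0]) (y := ![0,0,1]) (z := ![0,1,-1])
    (by simp) (by intro c d hcd; simpa using hcd) 1 (-1) (by simp)
  set b1 := ψ ![1,0,0] with hb1
  set b2 := ψ ![0,1,0] with hb2
  set b3 := ψ ![0,0,1] with hb3
  have hr : r ≠ 0 := by
    rintro rfl
    obtain ⟨c, d, hcd⟩ := line_transfer ψ h (x := ![1,0,1]) (y := ![0,0,1]) (z := ![1,0,0])
      (by simp) (by intro c d hcd; clear * - hcd; simp at hcd; grind) 1 (-1) (by simp)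
    rw [← hrs, ← hb1, ← hb3] at hcd
    have := hB 1 0 (- (c * s) - d) (by rw [← hcd]; module)
    simp at this
  have hs : s ≠ 0 := by
    rintro rfl
    obtain ⟨c, d, hcd⟩ := line_transfer ψ h (x := ![1,0,1]) (y := ![1,0,0]) (z := ![0,0,1])
      (by simp) (by intro c d hcd; clear * - hcd; simp at hcd; grind) 1 (-1) (by simp)
    rw [← hrs, ← hb1, ← hb3] at hcd
    have := hB (- (c * r) - d) 0 1 (by rw [← hcd]; module)
    simp at this
  have ht : t ≠ 0 := by
    rintro rfl
    obtain ⟨c, d, hcd⟩ := line_transfer ψ h (x := ![0,1,-1]) (y := ![0,0,1]) (z := ![0,1,0])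
      (by simp) (by intro c d hcd; clear * - hcd; simp at hcd; grind) 1 1 (by simp)
    rw [← htu, ← hb2, ← hb3] at hcd
    have := hB 0 1 (- (c * u) - d) (by rw [← hcd]; module)
    simp at this
  have hu : u ≠ 0 := by
    rintro rfl
    obtain ⟨c, d, hcd⟩ := line_transfer ψ h (x := ![0,1,-1]) (y := ![0,1,0]) (z := ![0,0,1])
      (by simp) (by intro c d hcd; clear * - hcd; simp at hcd; grind) (-1) 1 (by simp)
    rw [← htu, ← hb2, ← hb3] at hcd
    have := hB 0 (- (c * t) - d) 1 (by rw [← hcd]; module)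
    simp at this
  have key : ∀ k : ℕ, ∃ c : K, ψ ![1, (k : F), 0] = (c * r * u) • b1 - (c * k * s * t) • b2 := by
    intro k
    induction k with
    | zero =>
      refine ⟨(r * u)⁻¹, ?_⟩
      have : (r * u)⁻¹ * r * u = 1 := by field_simp
      rw [this]
      simp [b1]
    | succ k ih =>
      obtain ⟨c, hc⟩ := ih
      obtain ⟨α, β, h1⟩ := line_transfer ψ h (x := ![1,(k : F),0]) (y := ![0,0,1])
        (z := ![1,(k : F),1])
        (by simp) (by intro c d hcd; clear * - hcd; simp at hcd; grind) 1 1 (by simp)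
      obtain ⟨γ, δ, h2⟩ := line_transfer ψ h (x := ![1,0,1]) (y := ![0,1,0])
        (z := ![1,(k : F),1])
        (by simp) (by intro c d hcd; clear * - hcd; simp at hcd; grind) 1 (k : F) (by simp)
      obtain ⟨a, b, h3⟩ := line_transfer ψ h (x := ![1,0,0]) (y := ![0,1,0])
        (z := ![1,((k + 1 : ℕ) : F),0])
        (by simp) (by intro c d hcd; clear * - hcd; simp at hcd; grind) 1 (k + 1 : F) (by simp)
      obtain ⟨ε, ζ, h4⟩ := line_transfer ψ h (x := ![1,(k : F),1]) (y := ![0,1,-1])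
        (z := ![1,((k + 1 : ℕ) : F),0])
        (by simp) (by intro c d hcd; clear * - hcd; simp at hcd; grind) 1 1 (by simp)
      rw [hc, ← hb3] at h1
      rw [← hrs, ← hb2, ← h1] at h2
      rw [← h1, ← htu, ← h3, ← hb1, ← hb2] at h4
      have e1 := hB (γ * r - α * c * r * u) (δ + α * c * k * s * t) (γ * s - β) (by
        rw [← sub_eq_zero] at h2; rw [← h2]; module)
      have e2 := hB (ε * α * c * r * u - a) (ζ * t - ε * α * c * k * s * t - b)
        (ε * β + ζ * u) (by
        rw [← sub_eq_zero] at h4; rw [← h4]; module)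
      obtain ⟨e11, -, e13⟩ := e1
      obtain ⟨e21, e22, e23⟩ := e2
      have hγ : γ = α * c * u := by
        apply mul_right_cancel₀ hr; linear_combination e11
      have hζ : ζ = - ε * α * c * s := by
        apply mul_right_cancel₀ hu; linear_combination e23 + ε * e13 - ε * s * hγ
      refine ⟨ε * α * c, ?_⟩
      rw [← h3, ← hb1, ← hb2, show a = ε * α * c * r * u by linear_combination -e21,
        show b = - (ε * α * c * (k + 1 : ℕ) * s * t) by
          push_cast; linear_combination -e22 + t * hζ]
      module
  obtain ⟨c, hc⟩ := key p
  rw [hp, ← hb1] at hc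
  obtain ⟨e1, e2, -⟩ := hB (c * r * u - 1) (- (c * p * s * t)) 0 (by
    rw [← sub_eq_zero] at hc
    rw [← neg_eq_zero, ← hc]; module)
  have hc0 : c ≠ 0 := by rintro rfl; simp at e1
  simpa [hc0, hs, ht] using e2
end lin

section logic

/-- Atomic data of a tuple of sets. -/
abbrev Atm (n : ℕ) : Type :=
  (Fin n → Fin n → Prop) × (Fin n → Prop) × (Fin n → Prop) × (Fin n → Prop)

/-- Rank-`k` types of `n`-tuples. -/
def Tp : ℕ → ℕ → Type
  | 0, n => Atm n
  | k + 1, n => Atm n × Set (Tp k (n + 1))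

instance Tp.finite : ∀ k n, Finite (Tp k n)
  | 0, n => inferInstanceAs (Finite (Atm n))
  | k + 1, n => by
    have := Tp.finite k (n + 1)
    exact inferInstanceAs (Finite (Atm n × Set (Tp k (n + 1))))

/-- Atomic data of a tuple. -/
def atm (M : Matroid ℕ) {n : ℕ} (v : Fin n → Set ℕ) : Atm n :=
  (fun i j => v i ⊆ v j, fun i => v i = ∅, fun i => (v i).encard = 1, fun i => M.Indep (v i))

/-- The rank-`k` type of a tuple. -/
def tp (M : Matroid ℕ) : ∀ (k : ℕ) {n : ℕ}, (Fin n → Set ℕ) → Tp k n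
  | 0, _, v => atm M v
  | k + 1, _, v => (atm M v, {t | ∃ Y ⊆ M.E, t = tp M k (Fin.cons Y v)})

theorem tp_atm {M M' : Matroid ℕ} {k n : ℕ} {v v' : Fin n → Set ℕ}
    (h : tp M k v = tp M' k v') : atm M v = atm M' v' := by
  cases k with
  | zero => exact h
  | succ k => exact congrArg Prod.fst h

theorem tp_forth {M M' : Matroid ℕ} {k n : ℕ} {v v' : Fin n → Set ℕ}
    (h : tp M (k + 1) v = tp M' (k + 1) v') {Y : Set ℕ} (hY : Y ⊆ M.E) :
    ∃ Y' ⊆ M'.E, tp M k (Fin.cons Y v : Fin (n + 1) → Set ℕ) =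
      tp M' k (Fin.cons Y' v' : Fin (n + 1) → Set ℕ) := by
  have h2 : {t | ∃ Y ⊆ M.E, t = tp M k (Fin.cons Y v : Fin (n + 1) → Set ℕ)} =
    {t | ∃ Y ⊆ M'.E, t = tp M' k (Fin.cons Y v' : Fin (n + 1) → Set ℕ)} := congrArg Prod.snd h
  exact h2.subset ⟨Y, hY, rfl⟩

/-- Quantifier rank. -/
def MS0.qr : ∀ {n : ℕ}, MS0 n → ℕ
  | _, .subset _ _ => 0
  | _, .sing _ => 0
  | _, .ind _ => 0
  | _, .not φ => φ.qr
  | _, .and φ ψ => max φ.qr ψ.qr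
  | _, .ex φ => φ.qr + 1
  | _, .all φ => φ.qr + 1

/-- Left and right copies of `ℕ` in `ℕ`. -/
def lft (m : ℕ) : ℕ := Equiv.natSumNatEquivNat (.inl m)
/-- Right copy. -/
def rgt (m : ℕ) : ℕ := Equiv.natSumNatEquivNat (.inr m)

theorem lft_inj : Function.Injective lft :=
  Equiv.natSumNatEquivNat.injective.comp Sum.inl_injective
theorem rgt_inj : Function.Injective rgt :=
  Equiv.natSumNatEquivNat.injective.comp Sum.inr_injective
theorem lft_ne_rgt (a b : ℕ) : lft a ≠ rgt b := by
  simp [lft, rgt]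
  omega
theorem lft_or_rgt (m : ℕ) : (∃ a, m = lft a) ∨ ∃ b, m = rgt b := by
  obtain ⟨x, rfl⟩ := Equiv.natSumNatEquivNat.surjective m
  cases x with
  | inl a => exact .inl ⟨a, rfl⟩
  | inr a => exact .inr ⟨a, rfl⟩

/-- Disjoint union of two sets. -/
def comb (A B : Set ℕ) : Set ℕ := lft '' A ∪ rgt '' B

theorem lft_mem {A B : Set ℕ} {a : ℕ} : lft a ∈ comb A B ↔ a ∈ A := by
  simp [comb, lft_inj.eq_iff, (lft_ne_rgt _ _).symm]
theorem rgt_mem {A B : Set ℕ} {a : ℕ} : rgt a ∈ comb A B ↔ a ∈ B := by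
  simp [comb, rgt_inj.eq_iff, lft_ne_rgt]

theorem comb_subset {A B C D : Set ℕ} : comb A B ⊆ comb C D ↔ A ⊆ C ∧ B ⊆ D := by
  refine ⟨fun h => ⟨fun a ha => lft_mem.1 (h (lft_mem.2 ha)),
    fun a ha => rgt_mem.1 (h (rgt_mem.2 ha))⟩, fun h => ?_⟩
  exact union_subset_union (image_mono h.1) (image_mono h.2)

theorem exists_comb (Y : Set ℕ) : ∃ A B, Y = comb A B := by
  refine ⟨lft ⁻¹' Y, rgt ⁻¹' Y, ?_⟩
  ext m
  obtain ⟨a, rfl⟩ | ⟨a, rfl⟩ := lft_or_rgt m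
  · rw [lft_mem]; rfl
  · rw [rgt_mem]; rfl

theorem comb_encard (A B : Set ℕ) : (comb A B).encard = A.encard + B.encard := by
  rw [comb, encard_union_eq, lft_inj.encard_image, rgt_inj.encard_image]
  rw [Set.disjoint_left]
  rintro _ ⟨a, -, rfl⟩ ⟨b, -, h⟩
  exact lft_ne_rgt _ _ h.symm

theorem comb_sing (A B : Set ℕ) :
    (comb A B).encard = 1 ↔ (A = ∅ ∧ B.encard = 1) ∨ (A.encard = 1 ∧ B = ∅) := by
  rw [comb_encard, ← encard_eq_zero, ← encard_eq_zero]
  generalize A.encard = a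
  generalize B.encard = b
  constructor
  · intro h
    have ha : a ≠ ⊤ := by rintro rfl; simp at h
    have hb : b ≠ ⊤ := by rintro rfl; simp at h
    lift a to ℕ using ha
    lift b to ℕ using hb
    norm_cast at *
    omega
  · rintro (⟨rfl, rfl⟩ | ⟨rfl, rfl⟩) <;> simp

/-- Direct sum on `ℕ`. -/
noncomputable def dsum (M N : Matroid ℕ) : Matroid ℕ :=
  (M.sum N).mapEquiv Equiv.natSumNatEquivNat

theorem dsum_E (M N : Matroid ℕ) : (dsum M N).E = comb M.E N.E := by
  simp [dsum, comb, image_union, image_image]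
  rfl

theorem dsum_indep (M N : Matroid ℕ) (A B : Set ℕ) :
    (dsum M N).Indep (comb A B) ↔ M.Indep A ∧ N.Indep B := by
  rw [dsum, Matroid.mapEquiv_indep_iff, Matroid.sum_indep_iff]
  have h1 : Sum.inl ⁻¹' (Equiv.natSumNatEquivNat.symm '' comb A B) = A := by
    ext a
    rw [mem_preimage, Equiv.image_symm_eq_preimage]
    exact lft_mem
  have h2 : Sum.inr ⁻¹' (Equiv.natSumNatEquivNat.symm '' comb A B) = B := by
    ext a
    rw [mem_preimage, Equiv.image_symm_eq_preimage]
    exact rgt_mem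
  rw [h1, h2]

theorem comb_cons {n : ℕ} (A B : Set ℕ) (v w : Fin n → Set ℕ) :
    (Fin.cons (comb A B) (fun i => comb (v i) (w i)) : Fin (n + 1) → Set ℕ) =
    fun i => comb ((Fin.cons A v : Fin (n + 1) → Set ℕ) i)
      ((Fin.cons B w : Fin (n + 1) → Set ℕ) i) := by
  ext1 i
  refine Fin.cases ?_ (fun i => ?_) i <;> simp

theorem composition (N : Matroid ℕ) {n : ℕ} (φ : MS0 n) : ∀ (M M' : Matroid ℕ) (k : ℕ),
    φ.qr ≤ k → ∀ v v' w : Fin n → Set ℕ, tp M k v = tp M' k v' →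
    (MS0.Sat (dsum M N) φ (fun i => comb (v i) (w i)) ↔
      MS0.Sat (dsum M' N) φ (fun i => comb (v' i) (w i))) := by
  induction φ with
  | subset i j =>
    intro M M' k hk v v' w h
    have := congrFun (congrFun (congrArg Prod.fst (tp_atm h)) i) j
    simp only [atm] at this
    simp only [MS0.Sat, comb_subset, this]
  | sing i =>
    intro M M' k hk v v' w h
    have h1 := congrFun (congrArg (fun t => t.2.1) (tp_atm h)) i
    have h2 := congrFun (congrArg (fun t => t.2.2.1) (tp_atm h)) i
    simp only [atm] at h1 h2
    simp only [MS0.Sat, comb_sing, h1, h2]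
  | ind i =>
    intro M M' k hk v v' w h
    have h1 := congrFun (congrArg (fun t => t.2.2.2) (tp_atm h)) i
    simp only [atm] at h1
    simp only [MS0.Sat, dsum_indep, h1]
  | not φ ih =>
    intro M M' k hk v v' w h
    exact not_congr (ih M M' k hk v v' w h)
  | and φ ψ ih1 ih2 =>
    intro M M' k hk v v' w h
    simp only [MS0.qr, max_le_iff] at hk
    exact and_congr (ih1 M M' k hk.1 v v' w h) (ih2 M M' k hk.2 v v' w h)
  | ex φ ih =>
    intro M M' k hk v v' w h
    simp only [MS0.qr] at hk
    obtain ⟨k, rfl⟩ : ∃ l, k = l + 1 := ⟨k - 1, by omega⟩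
    have main : ∀ (M M' : Matroid ℕ) (v v'), tp M (k + 1) v = tp M' (k + 1) v' →
        MS0.Sat (dsum M N) φ.ex (fun i => comb (v i) (w i)) →
        MS0.Sat (dsum M' N) φ.ex (fun i => comb (v' i) (w i)) := by
      rintro M M' v v' h ⟨Y, hY, hs⟩
      obtain ⟨A, B, rfl⟩ := exists_comb Y
      rw [dsum_E, comb_subset] at hY
      obtain ⟨A', hA', hA⟩ := tp_forth h hY.1
      refine ⟨comb A' B, by rw [dsum_E, comb_subset]; exact ⟨hA', hY.2⟩, ?_⟩
      rw [comb_cons] at hs ⊢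
      exact (ih M M' k (by omega) _ _ _ hA).1 hs
    exact ⟨main M M' v v' h, main M' M v' v h.symm⟩
  | all φ ih =>
    intro M M' k hk v v' w h
    simp only [MS0.qr] at hk
    obtain ⟨k, rfl⟩ : ∃ l, k = l + 1 := ⟨k - 1, by omega⟩
    have main : ∀ (M M' : Matroid ℕ) (v v'), tp M (k + 1) v = tp M' (k + 1) v' →
        MS0.Sat (dsum M N) φ.all (fun i => comb (v i) (w i)) →
        MS0.Sat (dsum M' N) φ.all (fun i => comb (v' i) (w i)) := by
      intro M M' v v' h hs Y hY
      obtain ⟨A, B, rfl⟩ := exists_comb Y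
      rw [dsum_E, comb_subset] at hY
      obtain ⟨A', hA', hA⟩ := tp_forth h.symm hY.1
      have := hs (comb A' B) (by rw [dsum_E, comb_subset]; exact ⟨hA', hY.2⟩)
      rw [comb_cons] at this ⊢
      exact (ih M' M k (by omega) _ _ _ hA).2 this
    exact ⟨main M M' v v' h, main M' M v' v h.symm⟩

end logic

section mats

/-- The matroid represented by finitely many vectors. -/
noncomputable def linMat (F : Type) {V : Type} [Field F] [AddCommGroup V] [Module F V]
    (φ : ℕ → V) (E : Set ℕ) (hE : E.Finite) : Matroid ℕ :=
  (IndepMatroid.ofFinite hE (fun I => I ⊆ E ∧ LinearIndepOn F φ I)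
    ⟨empty_subset _, linearIndepOn_empty F φ⟩
    (fun _ _ hJ hIJ => ⟨hIJ.trans hJ.1, hJ.2.mono hIJ⟩)
    (by
      rintro I J ⟨hI, hIi⟩ ⟨hJ, hJi⟩ hlt
      by_contra! hcon
      have h1 : φ '' J ⊆ Submodule.span F (φ '' I) := by
        rintro _ ⟨e, he, rfl⟩
        by_contra hne
        obtain ⟨h2, h3⟩ := hIi.notMem_span_iff.1 hne
        exact hcon e he h3 (insert_subset (hJ he) hI) h2
      have h2 := Submodule.span_le.2 h1
      have h3 := Cardinal.toENat.monotone' (Submodule.rank_mono h2)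
      have h4 : J.encard ≤ I.encard := by
        rw [← toENat_rank_span_set hIi, ← toENat_rank_span_set hJi]
        exact h3
      rw [← (hE.subset hI).cast_ncard_eq, ← (hE.subset hJ).cast_ncard_eq] at h4
      norm_cast at h4
      omega)
    (fun _ h => h.1)).matroid

section
variable {F V : Type} [Field F] [AddCommGroup V] [Module F V]

theorem linMat_E (φ : ℕ → V) (E : Set ℕ) (hE : E.Finite) : (linMat F φ E hE).E = E := rfl

theorem linMat_indep (φ : ℕ → V) (E : Set ℕ) (hE : E.Finite) (I : Set ℕ) :
    (linMat F φ E hE).Indep I ↔ I ⊆ E ∧ LinearIndepOn F φ I := by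
  simp [linMat]

theorem comb_linearIndepOn (φ φ' : ℕ → V) (θ : ℕ → V × V)
    (h1 : θ ∘ lft = LinearMap.inl F V V ∘ φ) (h2 : θ ∘ rgt = LinearMap.inr F V V ∘ φ')
    (A B : Set ℕ) :
    LinearIndepOn F θ (comb A B) ↔ LinearIndepOn F φ A ∧ LinearIndepOn F φ' B := by
  constructor
  · intro h
    constructor
    · have := (h.mono (subset_union_left : lft '' A ⊆ comb A B)).comp_of_image lft_inj.injOn
      rw [h1] at this
      exact this.of_comp
    · have := (h.mono (subset_union_right : rgt '' B ⊆ comb A B)).comp_of_image rgt_inj.injOn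
      rw [h2] at this
      exact this.of_comp
  · rintro ⟨hA, hB⟩
    have hA' : LinearIndepOn F θ (lft '' A) := by
      apply LinearIndepOn.image_of_comp
      rw [h1]
      exact hA.map_injOn _ LinearMap.inl_injective.injOn
    have hB' : LinearIndepOn F θ (rgt '' B) := by
      apply LinearIndepOn.image_of_comp
      rw [h2]
      exact hB.map_injOn _ LinearMap.inr_injective.injOn
    refine hA'.union hB' ?_
    refine (LinearMap.isCompl_range_inl_inr (R := F) (M := V) (M₂ := V)).disjoint.mono ?_ ?_
    · rw [← image_comp, h1, Submodule.span_le]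
      rintro _ ⟨a, -, rfl⟩
      exact ⟨φ a, rfl⟩
    · rw [← image_comp, h2, Submodule.span_le]
      rintro _ ⟨a, -, rfl⟩
      exact ⟨φ' a, rfl⟩

end

theorem dsum_rep (F : Type) [Field F] {ι : Type} (φ φ' : ℕ → ι → F) (E E' : Set ℕ)
    (hE : E.Finite) (hE' : E'.Finite) :
    Representable (dsum (linMat F φ E hE) (linMat F φ' E' hE')) := by
  let θ : ℕ → (ι → F) × (ι → F) := fun m =>
    Sum.elim (fun a => (φ a, 0)) (fun b => (0, φ' b)) (Equiv.natSumNatEquivNat.symm m)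
  have h1 : θ ∘ lft = LinearMap.inl F (ι → F) (ι → F) ∘ φ := by
    ext1 a
    simp only [θ, lft, Function.comp, Equiv.symm_apply_apply]
    rfl
  have h2 : θ ∘ rgt = LinearMap.inr F (ι → F) (ι → F) ∘ φ' := by
    ext1 a
    simp only [θ, rgt, Function.comp, Equiv.symm_apply_apply]
    rfl
  let L := (LinearEquiv.sumArrowLequivProdArrow ι ι F F).symm
  refine ⟨F, inferInstance, ι ⊕ ι, L ∘ θ, fun I hI => ?_⟩
  obtain ⟨A, B, rfl⟩ := exists_comb I
  rw [dsum_E, comb_subset, linMat_E, linMat_E] at hI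
  rw [dsum_indep, linMat_indep, linMat_indep]
  simp only [hI.1, hI.2, true_and]
  rw [← comb_linearIndepOn φ φ' θ h1 h2]
  exact (L.toLinearMap.linearIndepOn_iff_of_injOn L.injective.injOn).symm

/-- An injection of the vectors of `F_p^3` into `ℕ`. -/
noncomputable def emb (p : Nat.Primes) : (Fin 3 → ZMod p.1) → ℕ :=
  haveI : Fact p.1.Prime := ⟨p.2⟩
  (exists_injective_nat (Fin 3 → ZMod p.1)).choose

theorem emb_inj (p : Nat.Primes) : Function.Injective (emb p) :=
  haveI : Fact p.1.Prime := ⟨p.2⟩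
  (exists_injective_nat (Fin 3 → ZMod p.1)).choose_spec

theorem range_emb_finite (p : Nat.Primes) : (range (emb p)).Finite :=
  haveI : Fact p.1.Prime := ⟨p.2⟩
  finite_range _

/-- The matroid of all vectors of `F_p^3`. -/
noncomputable def Nmat (p : Nat.Primes) : Matroid ℕ :=
  haveI : Fact p.1.Prime := ⟨p.2⟩
  linMat (ZMod p.1) (Function.invFun (emb p)) (range (emb p)) (range_emb_finite p)

theorem Nmat_E (p : Nat.Primes) : (Nmat p).E = range (emb p) := rfl

theorem Nmat_char (p : Nat.Primes) {K W : Type*} [Field K] [AddCommGroup W] [Module K W]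
    (ψ : ℕ → W) (h : ∀ I ⊆ (Nmat p).E, (Nmat p).Indep I ↔ LinearIndepOn K ψ I) :
    (p.1 : K) = 0 := by
  haveI : Fact p.1.Prime := ⟨p.2⟩
  refine staudt (F := ZMod p.1) (ψ ∘ emb p) (fun I => ?_) p.1 (by simp)
  have hw : Function.invFun (emb p) ∘ emb p = id := Function.invFun_comp (emb_inj p)
  have h1 := h (emb p '' I) (image_subset_range _ _)
  rw [Nmat, linMat_indep] at h1
  simp only [image_subset_range, true_and] at h1
  rw [← hw]
  exact ⟨fun h2 => (h1.1 (h2.image_of_comp _ _)).comp_of_image (emb_inj p).injOn,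
    fun h2 => (h1.2 (h2.image_of_comp _ _)).comp_of_image (emb_inj p).injOn⟩

theorem Nmat_not_rep (p q : Nat.Primes) (hpq : p ≠ q) : ¬ Representable (dsum (Nmat p) (Nmat q)) := by
  rintro ⟨K, _, ι, φ, h⟩
  have hp : (p.1 : K) = 0 := by
    refine Nmat_char p (φ ∘ lft) (fun I hI => ?_)
    have h1 := h (comb I ∅) (by rw [dsum_E, comb_subset]; exact ⟨hI, empty_subset _⟩)
    change _ ↔ LinearIndepOn K φ (comb I ∅) at h1
    rw [dsum_indep] at h1
    simp only [Matroid.empty_indep, and_true, comb, image_empty, union_empty] at h1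
    exact h1.trans ⟨fun h2 => LinearIndepOn.comp_of_image h2 lft_inj.injOn,
      fun h2 => LinearIndepOn.image_of_comp _ _ h2⟩
  have hq : (q.1 : K) = 0 := by
    refine Nmat_char q (φ ∘ rgt) (fun I hI => ?_)
    have h1 := h (comb ∅ I) (by rw [dsum_E, comb_subset]; exact ⟨empty_subset _, hI⟩)
    change _ ↔ LinearIndepOn K φ (comb ∅ I) at h1
    rw [dsum_indep] at h1
    simp only [Matroid.empty_indep, true_and, comb, image_empty, empty_union] at h1
    exact h1.trans ⟨fun h2 => LinearIndepOn.comp_of_image h2 rgt_inj.injOn,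
      fun h2 => LinearIndepOn.image_of_comp _ _ h2⟩
  have hc : Nat.Coprime p.1 q.1 :=
    (Nat.coprime_primes p.2 q.2).2 (fun h => hpq (Subtype.ext h))
  have := (Nat.isCoprime_iff_coprime.2 hc)
  obtain ⟨a, b, hab⟩ := this
  have h2 := congrArg (Int.cast : ℤ → K) hab
  push_cast at h2
  rw [hp, hq] at h2
  simp at h2

theorem Nmat_rep (p : Nat.Primes) : Representable (dsum (Nmat p) (Nmat p)) :=
  haveI : Fact p.1.Prime := ⟨p.2⟩
  dsum_rep _ _ _ _ _ _ _

theorem dsum_fin (p q : Nat.Primes) : (dsum (Nmat p) (Nmat q)).E.Finite := by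
  rw [dsum_E]
  exact ((range_emb_finite p).image _).union ((range_emb_finite q).image _)

end mats

/-- There is no sentence `ψ` of `MS₀` such that a finite matroid satisfies `ψ`
(interpreting `Ind` by its independent sets) if and only if it is representable over
at least one field. -/
theorem no_MS0_sentence_characterises_representability :
    ¬ ∃ ψ : MS0 0, ∀ M : Matroid ℕ, M.E.Finite →
      (MS0.Sat M ψ (fun i => i.elim0) ↔ Representable M) := by
  rintro ⟨ψ, h⟩
  obtain ⟨p, q, hpq, ht⟩ := Finite.exists_ne_map_eq_of_infinite
    (fun p : Nat.Primes => tp (Nmat p) ψ.qr (fun i : Fin 0 => i.elim0))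
  have h1 := (h _ (dsum_fin p p)).2 (Nmat_rep p)
  have h2 := composition (Nmat p) ψ (Nmat p) (Nmat q) ψ.qr le_rfl _ _ (fun i => i.elim0) ht
  apply Nmat_not_rep q p hpq.symm
  rw [← h _ (dsum_fin q p)]
  have e : ∀ v w : Fin 0 → Set ℕ, v = w := fun v w => funext fun i => i.elim0
  rw [e (fun i => i.elim0) (fun i => comb (i.elim0) (i.elim0))]
  apply h2.1
  rw [e (fun i => comb (i.elim0) (i.elim0)) (fun i => i.elim0)]
  exact h1
end

section
/- Let K be a field, s ≥ 3 an integer, and α ∈ K \ {0} an element of multiplicative order greater than 2s(s−1). Then the proper amalgam, along the common rank-2 five-point line ℓ = {a, b, x, y, z}, of the hoop matroid M(Γ(K, s, α)) and the loop matroid M(Δ(K, s, α)) is representable over K. -/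
open Set

/-- The rank (as an extended natural number) of a set `X` in a matroid `M`. -/
noncomputable def Matroid.erank' {α : Type*} (M : Matroid α) (X : Set α) : ℕ∞ :=
  ⨆ I ∈ {I : Set α | M.Indep I ∧ I ⊆ X}, I.encard

/-- The rank function of the proper amalgam of `M₁` and `M₂`. -/
noncomputable def amalRank {α : Type*} (M₁ M₂ : Matroid α) (X : Set α) : ℕ∞ :=
  ⨅ Y ∈ {Y : Set α | X ⊆ Y ∧ Y ⊆ M₁.E ∪ M₂.E},
    M₁.erank' (Y ∩ M₁.E) + M₂.erank' (Y ∩ M₂.E) - M₁.erank' (Y ∩ (M₁.E ∩ M₂.E))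

/-- `A` is the proper amalgam of `M₁` and `M₂`. -/
def IsProperAmalgam {α : Type*} (M₁ M₂ A : Matroid α) : Prop :=
  A.E = M₁.E ∪ M₂.E ∧ ∀ X ⊆ M₁.E ∪ M₂.E, A.erank' X = amalRank M₁ M₂ X

/-- The common ground-set elements of the gain graphs `Γ(K, s, α)` (the hoop gain
graph) and `Δ(L, t, β)` (the loop gain graph) are `a, b, x, y, z`; in addition
`Γ` has loops `a_i` (`hloop`) and the parallel edges `x_i` (`hx`), `y_i` (`hy`),
while `Δ` has the extra edge `g`, loops `b_i` (`lloop`) and the parallel edges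
`e_i` (`le`), `f_i` (`lf`). -/
inductive AmalEdge (s t : ℕ) : Type
  | a | b | x | y | z | g
  | hloop (i : Fin (s - 1))
  | hx (i : Fin s)
  | hy (i : Fin s)
  | lloop (i : Fin (2 * t - 2))
  | le (i : Fin (2 * t - 1))
  | lf (i : Fin (2 * t - 1))
  deriving DecidableEq

/-- The edges of the hoop gain graph `Γ(K, s, α)`. -/
def inHoop {s t : ℕ} : AmalEdge s t → Prop
  | .g | .lloop _ | .le _ | .lf _ => False
  | _ => True

/-- The edges of the loop gain graph `Δ(L, t, β)`. -/
def inLoopGraph {s t : ℕ} : AmalEdge s t → Prop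
  | .hloop _ | .hx _ | .hy _ => False
  | _ => True

/-- The column of the matrix `D(G, σ)` corresponding to an edge oriented from
vertex `u` to vertex `v` with gain `γ`: entry `1` in row `u`, `-γ` in row `v`, zeros
elsewhere (for an unbalanced loop, `u = v` and the column is the standard basis
vector at `u`). -/
def col {K : Type*} [Field K] (u v : ℕ) (γ : K) : ℕ → K :=
  fun i => if i = u then 1 else if i = v then -γ else 0

/-- The columns of the matrix `D(Γ(K, s, α), σ)` of the hoop gain graph on vertices
`u₁, …, u_{s+1}` (indexed `0, …, s`): loops `a` at `u₁`, `b` at `u_{s+1}`, `a_i` at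
`u_i` (`2 ≤ i ≤ s`), all with gain `α`; edges `x_i` (gain `1`) and `y_i` (gain `α`)
from `u_i` to `u_{i+1}`; edges `x, y, z` from `u₁` to `u_{s+1}` with gains
`1, α^(s-1), α^s`. Edges not in `Γ` are sent to the zero vector. -/
def hoopVec (K : Type*) [Field K] (a : K) (s t : ℕ) : AmalEdge s t → ℕ → K
  | .a => col 0 0 a
  | .b => col s s a
  | .x => col 0 s 1
  | .y => col 0 s (a ^ (s - 1))
  | .z => col 0 s (a ^ s)
  | .hloop i => col ((i : ℕ) + 1) ((i : ℕ) + 1) a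
  | .hx i => col (i : ℕ) ((i : ℕ) + 1) 1
  | .hy i => col (i : ℕ) ((i : ℕ) + 1) a
  | _ => fun _ => 0

/-- The columns of the matrix `D(Δ(L, t, β), σ)` of the loop gain graph on vertices
`v₁, …, v_{2t}` (indexed `0, …, 2t-1`): loops `a` at `v₁`, `b` at `v_{2t}`, `b_i` at
`v_i` (`2 ≤ i ≤ 2t-1`), all with gain `β`; edges `e_i` (gain `1`) and `f_i` (gain
`β^(t-1)` for `1 ≤ i ≤ t` and `β^t` for `t+1 ≤ i ≤ 2t-1`) from `v_i` to `v_{i+1}`;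
edges `x, y, z, g` from `v₁` to `v_{2t}` with gains `1, β^(t-1), β^t, β^(t(t-1))`.
Edges not in `Δ` are sent to the zero vector. -/
def loopVec (K : Type*) [Field K] (b : K) (s t : ℕ) : AmalEdge s t → ℕ → K
  | .a => col 0 0 b
  | .b => col (2 * t - 1) (2 * t - 1) b
  | .x => col 0 (2 * t - 1) 1
  | .y => col 0 (2 * t - 1) (b ^ (t - 1))
  | .z => col 0 (2 * t - 1) (b ^ t)
  | .g => col 0 (2 * t - 1) (b ^ (t * (t - 1)))
  | .lloop i => col ((i : ℕ) + 1) ((i : ℕ) + 1) b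
  | .le i => col (i : ℕ) ((i : ℕ) + 1) 1
  | .lf i => col (i : ℕ) ((i : ℕ) + 1) (if (i : ℕ) < t then b ^ (t - 1) else b ^ t)
  | _ => fun _ => 0

/-- `M` is the hoop matroid `M(Γ(K, s, α))`: the gain-graphic matroid of the hoop
gain graph, realised as the column matroid of the matrix `D(Γ(K, s, α), σ)`. -/
def IsHoopMatroid (K : Type*) [Field K] (a : K) (s t : ℕ)
    (M : Matroid (AmalEdge s t)) : Prop :=
  M.E = {e | inHoop e} ∧
    ∀ I : Set (AmalEdge s t),
      M.Indep I ↔ I ⊆ {e | inHoop e} ∧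
        LinearIndependent K (fun x : I => hoopVec K a s t x.val)

/-- `M` is the loop matroid `M(Δ(L, t, β))`: the gain-graphic matroid of the loop
gain graph, realised as the column matroid of the matrix `D(Δ(L, t, β), σ)`. -/
def IsLoopMatroid (K : Type*) [Field K] (b : K) (s t : ℕ)
    (M : Matroid (AmalEdge s t)) : Prop :=
  M.E = {e | inLoopGraph e} ∧
    ∀ I : Set (AmalEdge s t),
      M.Indep I ↔ I ⊆ {e | inLoopGraph e} ∧
        LinearIndependent K (fun x : I => loopVec K b s t x.val)

instance amalFinite (s t : ℕ) : Finite (AmalEdge s t) := by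
  rw [← Set.finite_univ_iff]
  refine Set.Finite.subset (s := ({.a, .b, .x, .y, .z, .g} : Set (AmalEdge s t)) ∪ range .hloop
    ∪ range .hx ∪ range .hy ∪ range .lloop ∪ range .le ∪ range .lf) ?_ ?_
  · simp only [Set.finite_union]
    refine ⟨⟨⟨⟨⟨⟨?_, ?_⟩, ?_⟩, ?_⟩, ?_⟩, ?_⟩, ?_⟩
    · simp
    all_goals exact Set.finite_range _
  · intro e _
    cases e <;> simp

theorem finrank_indepOn {K ι V : Type*} [Field K] [AddCommGroup V] [Module K V] [Finite ι]
    (v : ι → V) (I : Set ι) (h : LinearIndependent K (fun x : I => v x.val)) :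
    (I.encard : ℕ∞) = (Module.finrank K (Submodule.span K (v '' I)) : ℕ) := by
  classical
  have := Fintype.ofFinite I
  have h2 := finrank_span_eq_card h
  rw [show Set.range (fun x : I => v x.val) = v '' I by ext; simp] at h2
  rw [h2, Set.encard, ENat.card_eq_coe_fintype_card]

theorem finrank_mono_fin {K ι V : Type*} [Field K] [AddCommGroup V] [Module K V] [Finite ι]
    (v : ι → V) (I : Set ι) (S : Submodule K V) (h : S ≤ Submodule.span K (v '' I)) :
    Module.finrank K S ≤ Module.finrank K (Submodule.span K (v '' I)) := by
  have : FiniteDimensional K (Submodule.span K (v '' I)) :=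
    FiniteDimensional.span_of_finite K (Set.toFinite _)
  exact Submodule.finrank_mono h

theorem erank_eq {K ι V : Type*} [Field K] [AddCommGroup V] [Module K V] [Finite ι]
    (v : ι → V) (E : Set ι) (M : Matroid ι)
    (hM : ∀ I, M.Indep I ↔ I ⊆ E ∧ LinearIndependent K (fun x : I => v x.val))
    (X : Set ι) (hX : X ⊆ E) :
    M.erank' X = (Module.finrank K (Submodule.span K (v '' X)) : ℕ) := by
  unfold Matroid.erank'
  apply le_antisymm
  · refine iSup₂_le ?_
    rintro I ⟨hI, hIX⟩
    rw [finrank_indepOn v I ((hM I).1 hI).2]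
    exact_mod_cast finrank_mono_fin v X _ (Submodule.span_mono (Set.image_mono hIX))
  · obtain ⟨b, hbX, -, hsp, hb⟩ := exists_linearIndepOn_extension
      (linearIndepOn_empty K v) (Set.empty_subset X)
    have h1 := finrank_indepOn v b hb
    refine le_trans ?_ (le_iSup₂ (f := fun I (_ : I ∈ {I : Set ι | M.Indep I ∧ I ⊆ X}) => I.encard)
      b ⟨(hM b).2 ⟨hbX.trans hX, hb⟩, hbX⟩)
    rw [h1]
    exact_mod_cast finrank_mono_fin v b _ (Submodule.span_le.2 hsp)

theorem indep_iff_erank {ι : Type*} [Finite ι] (M : Matroid ι) (I : Set ι) :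
    M.Indep I ↔ I.encard ≤ M.erank' I := by
  constructor
  · intro h
    exact le_iSup₂ (f := fun J (_ : J ∈ {J : Set ι | M.Indep J ∧ J ⊆ I}) => J.encard)
      I ⟨h, subset_rfl⟩
  · intro h
    by_contra hn
    have hpos : I.ncard ≠ 0 := by
      intro h0
      rw [Set.ncard_eq_zero] at h0
      subst h0
      exact hn M.empty_indep
    have : M.erank' I ≤ ((I.ncard - 1 : ℕ) : ℕ∞) := by
      refine iSup₂_le ?_
      rintro J ⟨hJ, hJI⟩
      rw [← Set.Finite.cast_ncard_eq (Set.toFinite J)]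
      have : J.ncard < I.ncard := Set.ncard_lt_ncard
        (LE.le.ssubset_of_ne hJI (by rintro rfl; exact hn hJ))
      exact_mod_cast (by omega : J.ncard ≤ I.ncard - 1)
    have := h.trans this
    rw [← Set.Finite.cast_ncard_eq (Set.toFinite I)] at this
    have : I.ncard ≤ I.ncard - 1 := by exact_mod_cast this
    omega

theorem linind_iff {K ι V : Type*} [Field K] [AddCommGroup V] [Module K V] [Finite ι]
    (v : ι → V) (I : Set ι) :
    LinearIndependent K (fun x : I => v x.val) ↔
      I.encard ≤ (Module.finrank K (Submodule.span K (v '' I)) : ℕ) := by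
  classical
  have := Fintype.ofFinite I
  rw [linearIndependent_iff_card_le_finrank_span, Set.finrank,
    show Set.range (fun x : I => v x.val) = v '' I by ext; simp, Set.encard,
    ENat.card_eq_coe_fintype_card]
  norm_cast

theorem col_self {K : Type*} [Field K] (u : ℕ) (γ : K) : col u u γ = Pi.single u 1 := by
  ext i
  simp only [col, Pi.single_apply]
  split_ifs <;> rfl

theorem col_ne {K : Type*} [Field K] (u v : ℕ) (h : u ≠ v) (γ : K) :
    col u v γ = Pi.single u 1 - γ • Pi.single v 1 := by
  ext i
  simp only [col, Pi.single_apply, Pi.sub_apply, Pi.smul_apply, smul_eq_mul]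
  split_ifs <;> simp_all

/-- Truncation to indices at most `n`. -/
def trunc (K : Type*) [Field K] (n : ℕ) : (ℕ → K) →ₗ[K] (ℕ → K) where
  toFun v := fun i => if i ≤ n then v i else 0
  map_add' v w := by ext i; simp only [Pi.add_apply]; split_ifs <;> simp
  map_smul' c v := by ext i; simp

theorem trunc_single {K : Type*} [Field K] (n j : ℕ) :
    trunc K n (Pi.single j 1) = if j ≤ n then Pi.single j 1 else 0 := by
  ext i
  simp only [trunc, LinearMap.coe_mk, AddHom.coe_mk, Pi.single_apply]
  split_ifs <;> simp_all [Pi.single_apply] <;> omega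

theorem path_gain {K : Type*} [Field K] (S : Set (ℕ → K)) (n : ℕ) (hn : 0 < n)
    (G : ℕ → K → Prop) (C : K → Prop)
    (hS : ∀ v ∈ S, (∃ j, v = Pi.single j 1) ∨ (∃ i < n, ∃ γ, G i γ ∧ v = col i (i+1) γ) ∨
      (∃ γ, C γ ∧ v = col 0 n γ))
    (γ₀ : K) (hp : col 0 n γ₀ ∈ Submodule.span K S)
    (h0 : (Pi.single 0 1 : ℕ → K) ∉ Submodule.span K S) :
    C γ₀ ∨ ∃ c : ℕ → K, (∀ i < n, G i (c i)) ∧ γ₀ = ∏ i ∈ Finset.range n, c i := by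
  obtain ⟨f, hf0, hf⟩ := Submodule.exists_le_ker_of_notMem h0
  have hfp : f (col 0 n γ₀) = 0 := hf hp
  have hp' : f (Pi.single 0 1) = γ₀ * f (Pi.single n 1) := by
    rw [col_ne _ _ hn.ne] at hfp
    simpa [sub_eq_zero] using hfp
  have hfn : f (Pi.single n 1) ≠ 0 := by
    intro h; rw [h, mul_zero] at hp'; exact hf0 hp'
  by_cases hA : ∃ γ, C γ ∧ col 0 n γ ∈ S
  · left
    obtain ⟨γ, hC, hγ⟩ := hA
    have h1 : f (col 0 n γ) = 0 := hf (Submodule.subset_span hγ)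
    rw [col_ne _ _ hn.ne] at h1
    have h2 : f (Pi.single 0 1) = γ * f (Pi.single n 1) := by
      simpa [sub_eq_zero] using h1
    rw [hp'] at h2
    rwa [mul_right_cancel₀ hfn h2]
  by_cases hB : ∀ i < n, ∃ γ, G i γ ∧ col i (i+1) γ ∈ S
  · right
    choose! c hc using hB
    refine ⟨c, fun i hi => (hc i hi).1, ?_⟩
    have key : ∀ m ≤ n, f (Pi.single 0 1) = (∏ i ∈ Finset.range m, c i) * f (Pi.single m 1) := by
      intro m
      induction m with
      | zero => simp
      | succ m ih =>
        intro hm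
        have h1 : f (col m (m+1) (c m)) = 0 := hf (Submodule.subset_span (hc m hm).2)
        rw [col_ne _ _ (by omega)] at h1
        have h2 : f (Pi.single m 1) = c m * f (Pi.single (m+1) 1) := by
          simpa [sub_eq_zero] using h1
        rw [ih (by omega), h2, Finset.prod_range_succ, mul_assoc]
    have := key n le_rfl
    rw [hp'] at this
    exact mul_right_cancel₀ hfn this
  · exfalso
    push Not at hB
    obtain ⟨i, hi, hi2⟩ := hB
    have hle : Submodule.span K S ≤ LinearMap.ker (f ∘ₗ trunc K i) := by
      rw [Submodule.span_le]
      intro v hv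
      have hfv : f v = 0 := hf (Submodule.subset_span hv)
      simp only [SetLike.mem_coe, LinearMap.mem_ker, LinearMap.comp_apply]
      rcases hS v hv with ⟨j, rfl⟩ | ⟨j, hj, γ, hG, rfl⟩ | ⟨γ, hC, rfl⟩
      · rw [trunc_single]
        split_ifs
        · exact hfv
        · simp
      · have hne : j ≠ i := by rintro rfl; exact hi2 γ hG hv
        rw [col_ne _ _ (by omega)] at hfv ⊢
        rw [map_sub, map_smul, trunc_single, trunc_single]
        rcases lt_or_gt_of_ne hne with h | h
        · rw [if_pos (by omega), if_pos (by omega)]; exact hfv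
        · rw [if_neg (by omega), if_neg (by omega)]; simp
      · exact absurd ⟨γ, hC, hv⟩ hA
    have h1 : (f ∘ₗ trunc K i) (col 0 n γ₀) = 0 := hle hp
    rw [col_ne _ _ hn.ne, map_sub, map_smul, LinearMap.comp_apply, LinearMap.comp_apply,
      trunc_single, trunc_single, if_pos (by omega), if_neg (by omega)] at h1
    simp at h1
    exact hf0 h1

/-- Embedding of the hoop side. -/
def T1 (K : Type*) [Field K] : (ℕ → K) →ₗ[K] (ℕ ⊕ ℕ → K) where
  toFun v := Sum.elim v 0
  map_add' v w := by ext (i | i) <;> simp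
  map_smul' c v := by ext (i | i) <;> simp

/-- Embedding of the loop side. -/
def T2 (K : Type*) [Field K] (s n : ℕ) : (ℕ → K) →ₗ[K] (ℕ ⊕ ℕ → K) where
  toFun v := Sum.elim (fun i => if i = 0 then v 0 else if i = s then v n else 0)
    (fun i => if i = 0 then 0 else if i = n then 0 else v i)
  map_add' v w := by
    ext (i | i) <;> simp only [Sum.elim_inl, Sum.elim_inr, Pi.add_apply] <;> split_ifs <;> simp
  map_smul' c v := by
    ext (i | i) <;> simp

theorem T1_inj (K : Type*) [Field K] : Function.Injective (T1 K) := by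
  intro v w h
  ext i
  exact congrFun h (.inl i)

theorem T2_inj (K : Type*) [Field K] (s n : ℕ) (hs : s ≠ 0) : Function.Injective (T2 K s n) := by
  intro v w h
  ext i
  have h1 := congrFun h (.inl 0)
  have h2 := congrFun h (.inl s)
  have h3 := congrFun h (.inr i)
  simp only [T2, LinearMap.coe_mk, AddHom.coe_mk, Sum.elim_inl, Sum.elim_inr] at h1 h2 h3
  by_cases hi0 : i = 0
  · subst hi0; simpa using h1
  by_cases hin : i = n
  · subst hin; simpa [hs] using h2
  · simpa [hi0, hin] using h3

theorem T2_single_zero (K : Type*) [Field K] (s n : ℕ) (hn : n ≠ 0) :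
    T2 K s n (Pi.single 0 1) = T1 K (Pi.single 0 1) := by
  ext (i | i) <;> simp only [T1, T2, LinearMap.coe_mk, AddHom.coe_mk, Sum.elim_inl, Sum.elim_inr,
    Pi.single_apply] <;> split_ifs <;> simp_all

theorem T2_single_n (K : Type*) [Field K] (s n : ℕ) (hn : n ≠ 0) (hs : s ≠ 0) :
    T2 K s n (Pi.single n 1) = T1 K (Pi.single s 1) := by
  ext (i | i) <;> simp only [T1, T2, LinearMap.coe_mk, AddHom.coe_mk, Sum.elim_inl, Sum.elim_inr,
    Pi.single_apply] <;> split_ifs <;> simp_all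

theorem T2_col (K : Type*) [Field K] (s n : ℕ) (hn : n ≠ 0) (hs : s ≠ 0) (γ : K) :
    T2 K s n (col 0 n γ) = T1 K (col 0 s γ) := by
  rw [col_ne _ _ hn.symm, col_ne _ _ hs.symm, map_sub, map_sub, map_smul, map_smul,
    T2_single_zero _ _ _ hn, T2_single_n _ _ _ hn hs]

theorem T_inter (K : Type*) [Field K] (s n : ℕ) (hs : s ≠ 0) (v w : ℕ → K)
    (h : T1 K v = T2 K s n w) :
    v = v 0 • Pi.single 0 1 + v s • Pi.single s 1 := by
  ext i
  have h1 := congrFun h (.inl i)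
  simp only [T1, T2, LinearMap.coe_mk, AddHom.coe_mk, Sum.elim_inl] at h1
  simp only [Pi.add_apply, Pi.smul_apply, Pi.single_apply, smul_eq_mul]
  split_ifs at h1 ⊢ <;> simp_all

open Classical in
/-- The combined representation. -/
noncomputable def phi (K : Type*) [Field K] (a : K) (s : ℕ) (e : AmalEdge s s) : ℕ ⊕ ℕ → K :=
  if inHoop e then T1 K (hoopVec K a s s e) else T2 K s (2 * s - 1) (loopVec K a s s e)

theorem phi_hoop (K : Type*) [Field K] (a : K) (s : ℕ) (e : AmalEdge s s) (h : inHoop e) :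
    phi K a s e = T1 K (hoopVec K a s s e) := if_pos h

theorem phi_loop (K : Type*) [Field K] (a : K) (s : ℕ) (hs : 3 ≤ s) (e : AmalEdge s s)
    (h : inLoopGraph e) : phi K a s e = T2 K s (2 * s - 1) (loopVec K a s s e) := by
  have hn : 2 * s - 1 ≠ 0 := by omega
  have hs0 : s ≠ 0 := by omega
  unfold phi
  split_ifs with hh
  · cases e <;> simp only [inHoop, inLoopGraph] at h hh <;>
      simp only [hoopVec, loopVec, T2_col _ _ _ hn hs0, col_self, T2_single_zero _ _ _ hn,
        T2_single_n _ _ _ hn hs0]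
  · rfl

theorem hoop_gain (K : Type*) [Field K] (a : K) (s : ℕ) (hs : 3 ≤ s) (Y : Set (AmalEdge s s))
    (γ : K) (hp : col 0 s γ ∈ Submodule.span K (hoopVec K a s s '' (Y ∩ {e | inHoop e})))
    (h0 : (Pi.single 0 1 : ℕ → K) ∉
      Submodule.span K (hoopVec K a s s '' (Y ∩ {e | inHoop e}))) :
    ∃ k ≤ s, γ = a ^ k := by
  have := path_gain _ s (by omega) (fun _ γ => γ = 1 ∨ γ = a) (fun γ => ∃ k ≤ s, γ = a ^ k) ?_ γ hp h0
  · rcases this with h | ⟨c, hc, h⟩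
    · exact h
    · have key : ∀ m ≤ s, ∃ k ≤ m, ∏ i ∈ Finset.range m, c i = a ^ k := by
        intro m
        induction m with
        | zero => intro _; exact ⟨0, le_rfl, by simp⟩
        | succ m ih =>
          intro hm
          obtain ⟨k, hk, hk2⟩ := ih (by omega)
          rw [Finset.prod_range_succ, hk2]
          rcases hc m (by omega) with h | h
          · exact ⟨k, by omega, by rw [h, mul_one]⟩
          · exact ⟨k + 1, by omega, by rw [h, pow_succ]⟩
      rw [h]
      exact key s le_rfl
  · rintro _ ⟨e, ⟨-, he⟩, rfl⟩
    cases e with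
    | a => left; exact ⟨0, col_self _ _⟩
    | b => left; exact ⟨s, col_self _ _⟩
    | x => right; right; exact ⟨1, ⟨0, by omega, by simp⟩, rfl⟩
    | y => right; right; exact ⟨_, ⟨s - 1, by omega, rfl⟩, rfl⟩
    | z => right; right; exact ⟨_, ⟨s, by omega, rfl⟩, rfl⟩
    | hloop i => left; exact ⟨_, col_self _ _⟩
    | hx i => right; left; exact ⟨i, i.2, 1, Or.inl rfl, rfl⟩
    | hy i => right; left; exact ⟨i, i.2, a, Or.inr rfl, rfl⟩
    | g => exact he.elim
    | lloop i => exact he.elim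
    | le i => exact he.elim
    | lf i => exact he.elim

theorem loop_gain (K : Type*) [Field K] (a : K) (s : ℕ) (hs : 3 ≤ s) (Y : Set (AmalEdge s s))
    (γ : K)
    (hp : col 0 (2 * s - 1) γ ∈ Submodule.span K (loopVec K a s s '' (Y ∩ {e | inLoopGraph e})))
    (h0 : (Pi.single 0 1 : ℕ → K) ∉
      Submodule.span K (loopVec K a s s '' (Y ∩ {e | inLoopGraph e}))) :
    ∃ m ≤ 2 * s * (s - 1), γ = a ^ m ∧ (m = 0 ∨ m = s - 1 ∨ m = s ∨ s < m) := by
  obtain ⟨r, rfl⟩ : ∃ r, s = r + 1 := ⟨s - 1, by omega⟩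
  simp only [Nat.add_sub_cancel]
  have := path_gain _ (2 * (r + 1) - 1) (by omega)
    (fun i γ => γ = 1 ∨ γ = (if i < r + 1 then a ^ r else a ^ (r + 1)))
    (fun γ => ∃ m ≤ 2 * (r + 1) * r, γ = a ^ m ∧ (m = 0 ∨ m = r ∨ m = r + 1 ∨ r + 1 < m))
    ?_ γ hp h0
  · rcases this with h | ⟨c, hc, h⟩
    · exact h
    · have key : ∀ m ≤ 2 * (r + 1) - 1, ∃ i j, i ≤ r + 1 ∧ i ≤ m ∧ j ≤ m - (r + 1) ∧
          ∏ i ∈ Finset.range m, c i = a ^ (i * r + j * (r + 1)) := by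
        intro m
        induction m with
        | zero => intro _; exact ⟨0, 0, by simp⟩
        | succ m ih =>
          intro hm
          obtain ⟨i, j, hi, hi2, hj, hk2⟩ := ih (by omega)
          rw [Finset.prod_range_succ, hk2]
          rcases hc m (by omega) with h | h
          · exact ⟨i, j, by omega, by omega, by omega, by rw [h, mul_one]⟩
          · split_ifs at h with hlt
            · exact ⟨i + 1, j, by omega, by omega, by omega, by rw [h]; ring⟩
            · exact ⟨i, j + 1, by omega, by omega, by omega, by rw [h]; ring⟩
      obtain ⟨i, j, hi, -, hj, hk⟩ := key _ le_rfl
      have hj : j ≤ r := by omega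
      refine ⟨i * r + j * (r + 1), by nlinarith, by rw [h, hk], ?_⟩
      rcases i with _ | _ | i
      · rcases j with _ | _ | j
        · simp
        · simp
        · right; right; right; nlinarith
      · rcases j with _ | j
        · simp
        · right; right; right; nlinarith
      · right; right; right; nlinarith
  · rintro _ ⟨e, ⟨-, he⟩, rfl⟩
    cases e with
    | a => left; exact ⟨0, col_self _ _⟩
    | b => left; exact ⟨_, col_self _ _⟩
    | x => right; right; exact ⟨1, ⟨0, by omega, by simp⟩, rfl⟩
    | y => right; right; exact ⟨_, ⟨r, by nlinarith, rfl, by simp⟩, rfl⟩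
    | z => right; right; exact ⟨_, ⟨r + 1, by nlinarith, rfl, by simp⟩, rfl⟩
    | g => right; right; exact ⟨_, ⟨(r + 1) * r, by nlinarith, rfl, by right; right; right; nlinarith⟩, rfl⟩
    | lloop i => left; exact ⟨_, col_self _ _⟩
    | le i => right; left; exact ⟨i, i.2, 1, Or.inl rfl, rfl⟩
    | lf i => right; left; exact ⟨i, i.2, _, Or.inr rfl, rfl⟩
    | hloop i => exact he.elim
    | hx i => exact he.elim
    | hy i => exact he.elim

theorem pow_inj_of_order {K : Type*} [Field K] (a : K) (ha : a ≠ 0) (N : ℕ)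
    (h : ∀ k : ℕ, 1 ≤ k → k ≤ N → a ^ k ≠ 1) (k m : ℕ) (hkm : k ≤ m) (hm : m ≤ N)
    (he : a ^ k = a ^ m) : k = m := by
  by_contra hne
  refine h (m - k) (by omega) (by omega) ?_
  have : a ^ k * a ^ (m - k) = a ^ k * 1 := by rw [← pow_add, mul_one, he]; congr 1; omega
  exact mul_left_cancel₀ (pow_ne_zero _ ha) this

theorem span_phi_hoop (K : Type*) [Field K] (a : K) (s : ℕ) (Y : Set (AmalEdge s s))
    (hY : Y ⊆ {e | inHoop e}) :
    Submodule.span K (phi K a s '' Y) =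
      (Submodule.span K (hoopVec K a s s '' Y)).map (T1 K) := by
  rw [Submodule.map_span, Set.image_image]
  congr 1
  exact Set.image_congr fun e he => phi_hoop K a s e (hY he)

theorem span_phi_loop (K : Type*) [Field K] (a : K) (s : ℕ) (hs : 3 ≤ s) (Y : Set (AmalEdge s s))
    (hY : Y ⊆ {e | inLoopGraph e}) :
    Submodule.span K (phi K a s '' Y) =
      (Submodule.span K (loopVec K a s s '' Y)).map (T2 K s (2 * s - 1)) := by
  rw [Submodule.map_span, Set.image_image]
  congr 1
  exact Set.image_congr fun e he => phi_loop K a s hs e (hY he)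

theorem key_inter (K : Type*) [Field K] (a : K) (s : ℕ) (hs : 3 ≤ s) (ha : a ≠ 0)
    (horder : ∀ k : ℕ, 1 ≤ k → k ≤ 2 * s * (s - 1) → a ^ k ≠ 1) (Y : Set (AmalEdge s s))
    (hY : ∀ e, phi K a s e ∈ Submodule.span K (phi K a s '' Y) → e ∈ Y) :
    Submodule.span K (phi K a s '' (Y ∩ {e | inHoop e})) ⊓
      Submodule.span K (phi K a s '' (Y ∩ {e | inLoopGraph e})) ≤
    Submodule.span K (phi K a s '' (Y ∩ ({e | inHoop e} ∩ {e | inLoopGraph e}))) := by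
  have hn : 2 * s - 1 ≠ 0 := by omega
  have hs0 : s ≠ 0 := by omega
  rintro u ⟨hu1, hu2⟩
  have hU1 := Submodule.span_mono (R := K) (Set.image_mono (f := phi K a s)
    (Set.inter_subset_left (s := Y) (t := {e | inHoop e})))
  have hU2 := Submodule.span_mono (R := K) (Set.image_mono (f := phi K a s)
    (Set.inter_subset_left (s := Y) (t := {e | inLoopGraph e})))
  have huU := hU1 hu1
  set R := Submodule.span K (phi K a s '' (Y ∩ ({e | inHoop e} ∩ {e | inLoopGraph e}))) with hR
  set U := Submodule.span K (phi K a s '' Y) with hU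
  have hmem : ∀ e : AmalEdge s s, inHoop e → inLoopGraph e → phi K a s e ∈ U → phi K a s e ∈ R :=
    fun e h1 h2 h3 => Submodule.subset_span ⟨e, ⟨hY e h3, h1, h2⟩, rfl⟩
  have hpa : phi K a s .a = T1 K (Pi.single 0 1) := by
    rw [phi_hoop K a s _ (by simp [inHoop])]; simp only [hoopVec, col_self]
  have hpb : phi K a s .b = T1 K (Pi.single s 1) := by
    rw [phi_hoop K a s _ (by simp [inHoop])]; simp only [hoopVec, col_self]
  have hma := hmem .a trivial trivial
  have hmb := hmem .b trivial trivial
  rw [hpa] at hma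
  rw [hpb] at hmb
  rw [span_phi_hoop K a s _ Set.inter_subset_right] at hu1 hU1
  rw [span_phi_loop K a s hs _ Set.inter_subset_right] at hu2 hU2
  obtain ⟨v, hv, rfl⟩ := hu1
  obtain ⟨w, hw, hwv⟩ := hu2
  have hv' := T_inter K s (2 * s - 1) hs0 v w hwv.symm
  generalize v 0 = p at hv'
  generalize v s = q at hv'
  subst hv'
  have hTv : T1 K (p • Pi.single 0 1 + q • Pi.single s 1) =
    p • T1 K (Pi.single 0 1) + q • T1 K (Pi.single s 1) := by simp only [map_add, map_smul]
  rw [hTv] at huU ⊢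
  by_cases hA : T1 K (Pi.single 0 1) ∈ U
  · refine R.add_mem (R.smul_mem _ (hma hA)) ?_
    by_cases hq : q = 0
    · simp [hq]
    · refine R.smul_mem _ (hmb ?_)
      have := (Submodule.add_mem_iff_right U (U.smul_mem p hA)).1 huU
      exact (Submodule.smul_mem_iff U hq).1 this
  by_cases hp0 : p = 0
  · subst hp0
    rw [zero_smul, zero_add] at huU ⊢
    by_cases hq : q = 0
    · simp [hq]
    · exact R.smul_mem _ (hmb ((Submodule.smul_mem_iff U hq).1 huU))
  have hcol : p • Pi.single 0 1 + q • Pi.single s 1 = p • col (K := K) 0 s (-(q / p)) := by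
    rw [col_ne _ _ hs0.symm, smul_sub, smul_smul]
    rw [mul_neg, mul_div_cancel₀ _ hp0, neg_smul, sub_neg_eq_add]
  rw [← hTv, hcol, map_smul] at huU ⊢
  rw [hcol] at hv hwv
  rw [map_smul] at hwv
  clear hTv hcol
  generalize -(q / p) = γ at *
  have h1 := (Submodule.smul_mem_iff _ hp0).1 hv
  have h2 : col 0 (2 * s - 1) γ ∈
      Submodule.span K (loopVec K a s s '' (Y ∩ {e | inLoopGraph e})) := by
    have : w = p • col 0 (2 * s - 1) γ := by
      apply T2_inj K s (2 * s - 1) hs0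
      rw [map_smul, T2_col _ _ _ hn hs0, hwv]
    rw [this] at hw
    exact (Submodule.smul_mem_iff _ hp0).1 hw
  have hcU : T1 K (col 0 s γ) ∈ U := (Submodule.smul_mem_iff _ hp0).1 huU
  obtain ⟨k, hk, hk2⟩ := hoop_gain K a s hs Y γ h1 (fun h => hA (hU1 ⟨_, h, rfl⟩))
  obtain ⟨m, hm, hm2, hm3⟩ := loop_gain K a s hs Y γ h2
    (fun h => hA (hU2 ⟨_, h, T2_single_zero _ _ _ hn⟩))
  have hkm : m ≤ k := by
    by_contra hlt
    have := pow_inj_of_order a ha _ horder k m (by omega) hm (by rw [← hk2, ← hm2])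
    omega
  refine R.smul_mem _ ?_
  rcases hm3 with rfl | rfl | hms | h
  · have := hmem .x trivial trivial
    rw [phi_hoop K a s .x trivial] at this
    rw [pow_zero] at hm2
    rw [hm2] at hcU ⊢
    exact this hcU
  · have := hmem .y trivial trivial
    rw [phi_hoop K a s .y trivial] at this
    rw [hm2] at hcU ⊢
    exact this hcU
  · have := hmem .z trivial trivial
    rw [phi_hoop K a s .z trivial] at this
    rw [hms] at hm2
    rw [hm2] at hcU ⊢
    exact this hcU
  · omega

theorem cover {s : ℕ} : ({e | inHoop e} ∪ {e | inLoopGraph e} : Set (AmalEdge s s)) = Set.univ := by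
  ext e
  cases e <;> simp [inHoop, inLoopGraph]

theorem amal_eq (K : Type*) [Field K] (a : K) (s : ℕ) (hs : 3 ≤ s) (ha : a ≠ 0)
    (horder : ∀ k : ℕ, 1 ≤ k → k ≤ 2 * s * (s - 1) → a ^ k ≠ 1)
    (M₁ M₂ : Matroid (AmalEdge s s))
    (hM₁ : IsHoopMatroid K a s s M₁) (hM₂ : IsLoopMatroid K a s s M₂) (X : Set (AmalEdge s s)) :
    amalRank M₁ M₂ X = (Module.finrank K (Submodule.span K (phi K a s '' X)) : ℕ) := by
  obtain ⟨hE1, hI1⟩ := hM₁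
  obtain ⟨hE2, hI2⟩ := hM₂
  have hs0 : s ≠ 0 := by omega
  have r1 : ∀ Z ⊆ {e | inHoop e}, M₁.erank' Z =
      (Module.finrank K (Submodule.span K (phi K a s '' Z)) : ℕ) := by
    intro Z hZ
    rw [erank_eq _ _ M₁ hI1 Z hZ, span_phi_hoop K a s Z hZ]
    rw [(Submodule.equivMapOfInjective _ (T1_inj K) _).finrank_eq]
  have r2 : ∀ Z ⊆ {e | inLoopGraph e}, M₂.erank' Z =
      (Module.finrank K (Submodule.span K (phi K a s '' Z)) : ℕ) := by
    intro Z hZ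
    rw [erank_eq _ _ M₂ hI2 Z hZ, span_phi_loop K a s hs Z hZ]
    rw [(Submodule.equivMapOfInjective _ (T2_inj K s _ hs0) _).finrank_eq]
  have hsum : ∀ Y : Set (AmalEdge s s),
      Module.finrank K (Submodule.span K (phi K a s '' Y)) +
        Module.finrank K ↥(Submodule.span K (phi K a s '' (Y ∩ {e | inHoop e})) ⊓
      Submodule.span K (phi K a s '' (Y ∩ {e | inLoopGraph e}))) =
      Module.finrank K (Submodule.span K (phi K a s '' (Y ∩ {e | inHoop e}))) +
      Module.finrank K (Submodule.span K (phi K a s '' (Y ∩ {e | inLoopGraph e}))) := by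
    intro Y
    have f1 : FiniteDimensional K (Submodule.span K (phi K a s '' (Y ∩ {e | inHoop e}))) :=
      FiniteDimensional.span_of_finite K (Set.toFinite _)
    have f2 : FiniteDimensional K (Submodule.span K (phi K a s '' (Y ∩ {e | inLoopGraph e}))) :=
      FiniteDimensional.span_of_finite K (Set.toFinite _)
    have h := Submodule.finrank_sup_add_finrank_inf_eq
      (Submodule.span K (phi K a s '' (Y ∩ {e | inHoop e})))
      (Submodule.span K (phi K a s '' (Y ∩ {e | inLoopGraph e})))
    rw [← Submodule.span_union, ← Set.image_union,
      ← Set.inter_union_distrib_left, cover, Set.inter_univ] at h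
    exact h
  have hle : ∀ Y : Set (AmalEdge s s),
      Submodule.span K (phi K a s '' (Y ∩ ({e | inHoop e} ∩ {e | inLoopGraph e}))) ≤
      Submodule.span K (phi K a s '' (Y ∩ {e | inHoop e})) ⊓
      Submodule.span K (phi K a s '' (Y ∩ {e | inLoopGraph e})) := by
    intro Y
    exact le_inf (Submodule.span_mono (Set.image_mono fun e he => ⟨he.1, he.2.1⟩))
      (Submodule.span_mono (Set.image_mono fun e he => ⟨he.1, he.2.2⟩))
  unfold amalRank
  rw [hE1, hE2, cover]
  apply le_antisymm
  · set Y : Set (AmalEdge s s) := {e | phi K a s e ∈ Submodule.span K (phi K a s '' X)} with hYdef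
    have hXY : X ⊆ Y := fun e he => Submodule.subset_span ⟨e, he, rfl⟩
    have hspan : Submodule.span K (phi K a s '' Y) = Submodule.span K (phi K a s '' X) := by
      apply le_antisymm
      · rw [Submodule.span_le]
        rintro _ ⟨e, he, rfl⟩
        exact he
      · exact Submodule.span_mono (Set.image_mono hXY)
    have hk := key_inter K a s hs ha horder Y (by rw [hspan]; exact fun e he => he)
    refine (iInf₂_le Y ⟨hXY, Set.subset_univ _⟩).trans ?_
    rw [r1 _ Set.inter_subset_right, r2 _ Set.inter_subset_right,
      r1 _ (fun e he => he.2.1), le_antisymm (hle Y) hk, ← hspan]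
    have := hsum Y
    norm_cast
    omega
  · refine le_iInf₂ ?_
    rintro Y ⟨hXY, -⟩
    rw [r1 _ Set.inter_subset_right, r2 _ Set.inter_subset_right,
      r1 _ (fun e he => he.2.1)]
    have h1 := hsum Y
    have h2 := finrank_mono_fin (phi K a s) Y _ (Submodule.span_mono (R := K) (Set.image_mono hXY))
    have f1 : FiniteDimensional K (Submodule.span K (phi K a s '' (Y ∩ {e | inHoop e}))) :=
      FiniteDimensional.span_of_finite K (Set.toFinite _)
    have h3 := Submodule.finrank_mono (hle Y)
    norm_cast
    omega

/-- Let `K` be a field, `s ≥ 3`, and `α ∈ K \ {0}` of multiplicative order greater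
than `2s(s-1)`. Then the proper amalgam, along the common rank-2 five-point line
`ℓ = {a, b, x, y, z}`, of the hoop matroid `M(Γ(K, s, α))` and the loop matroid
`M(Δ(K, s, α))` is representable over `K`. -/
theorem amalgam_representable (K : Type) [Field K] (s : ℕ) (hs : 3 ≤ s)
    (a : K) (ha : a ≠ 0)
    (horder : ∀ k : ℕ, 1 ≤ k → k ≤ 2 * s * (s - 1) → a ^ k ≠ 1)
    (M₁ M₂ A : Matroid (AmalEdge s s))
    (hM₁ : IsHoopMatroid K a s s M₁)
    (hM₂ : IsLoopMatroid K a s s M₂)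
    (hA : IsProperAmalgam M₁ M₂ A) :
    RepOver K A := by
  refine ⟨ℕ ⊕ ℕ, phi K a s, fun I _ => ?_⟩
  rw [indep_iff_erank, linind_iff, hA.2 I, amal_eq K a s hs ha horder M₁ M₂ hM₁ hM₂]
  rw [hM₁.1, hM₂.1, cover]
  exact Set.subset_univ _
end
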